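/- arXiv:2005.13777 — 2 statements merged into one kernel-verified Lean document; each statement's English description precedes it below -/
import Mathlib

section
/- Let A ⊆ ℕ be a maximal c.e. set. Then (E_A)⁺ is self-full: every total computable function f : ℕ → ℕ that is a computable reduction from (E_A)⁺ to (E_A)⁺ has range meeting every (E_A)⁺-equivalence class, i.e., for every e there exists e' with f(e') (E_A)⁺ e. -/
/-- The `e`-th partial computable function. -/
def phi (e : ℕ) : ℕ →. ℕ :=
  Nat.Partrec.Code.eval (Denumerable.ofNat Nat.Partrec.Code e)

/-- `W_e`, the `e`-th c.e. set: the domain of `φ_e`. -/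
def WSet (e : ℕ) : Set ℕ := (phi e).Dom

/-- The `E`-equivalence class of `k`. -/
def classOf (E : ℕ → ℕ → Prop) (k : ℕ) : Set ℕ := {x | E k x}

/-- Computable reducibility of binary relations on ℕ. -/
def Reduces (E F : ℕ → ℕ → Prop) : Prop :=
  ∃ f : ℕ → ℕ, Computable f ∧ ∀ m n, E m n ↔ F (f m) (f n)

/-- The computable FS-jump of `E`: `e E⁺ e'` iff the set of `E`-classes of elements
of `ran φ_e` equals the set of `E`-classes of elements of `ran φ_{e'}`. -/
def FSJump (E : ℕ → ℕ → Prop) : ℕ → ℕ → Prop :=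
  fun e e' => classOf E '' (phi e).ran = classOf E '' (phi e').ran

/-- A set is c.e. if it is `W_e` for some `e`. -/
def CeSet (S : Set ℕ) : Prop := ∃ e : ℕ, S = WSet e

/-- `E_A`: `m E_A n` iff `m = n` or both `m, n ∈ A`. -/
def EA (A : Set ℕ) : ℕ → ℕ → Prop :=
  fun m n => m = n ∨ (m ∈ A ∧ n ∈ A)

/-- A c.e. set `A` is maximal if its complement is infinite and for every c.e. `W`,
either `W \ A` or `Wᶜ \ A` is finite. -/
def MaximalSet (A : Set ℕ) : Prop :=
  CeSet A ∧ Aᶜ.Infinite ∧ ∀ W : Set ℕ, CeSet W → (W \ A).Finite ∨ (Wᶜ \ A).Finite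

/-! ### Toolkit for c.e. predicates -/

/-- c.e. predicates in normal form. -/
def CEP {α : Type} [Primcodable α] (P : α → Prop) : Prop :=
  ∃ R : α → ℕ → Bool, Computable₂ R ∧ ∀ a, P a ↔ ∃ n, R a n = true

section CEPsec
variable {α β : Type} [Primcodable α] [Primcodable β]

theorem CEP.of_iff {P Q : α → Prop} (h : CEP P) (H : ∀ a, Q a ↔ P a) : CEP Q := by
  obtain ⟨R, hR, h⟩ := h
  exact ⟨R, hR, fun a => (H a).trans (h a)⟩

theorem CEP.comp {P : β → Prop} (h : CEP P) {g : α → β} (hg : Computable g) :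
    CEP (fun a => P (g a)) := by
  obtain ⟨R, hR, h⟩ := h
  exact ⟨fun a n => R (g a) n, hR.comp₂ (hg.comp Computable.fst).to₂ Computable.snd.to₂,
    fun a => h (g a)⟩

theorem CEP.of_bool {g : α → Bool} (hg : Computable g) : CEP (fun a => g a = true) :=
  ⟨fun a _ => g a, (hg.comp Computable.fst).to₂, fun a => by simp⟩

theorem comp_and {f g : α → Bool} (hf : Computable f) (hg : Computable g) :
    Computable (fun a => f a && g a) :=
  (Primrec.and.to_comp.comp hf hg)

theorem comp_or {f g : α → Bool} (hf : Computable f) (hg : Computable g) :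
    Computable (fun a => f a || g a) :=
  (Primrec.or.to_comp.comp hf hg)

theorem comp_not {f : α → Bool} (hf : Computable f) :
    Computable (fun a => ! f a) :=
  (Primrec.not.to_comp.comp hf)

theorem comp_lt {f g : α → ℕ} (hf : Computable f) (hg : Computable g) :
    Computable (fun a => decide (f a < g a)) :=
  (Primrec.nat_lt.decide.to_comp.comp hf hg)

theorem comp_eq {f g : α → ℕ} (hf : Computable f) (hg : Computable g) :
    Computable (fun a => decide (f a = g a)) :=
  (Primrec.eq (α := ℕ)).decide.to_comp.comp hf hg

theorem comp_eqo {f g : α → Option ℕ} (hf : Computable f) (hg : Computable g) :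
    Computable (fun a => decide (f a = g a)) :=
  (Primrec.eq (α := Option ℕ)).decide.to_comp.comp hf hg

theorem CEP.and {P Q : α → Prop} (hP : CEP P) (hQ : CEP Q) : CEP (fun a => P a ∧ Q a) := by
  obtain ⟨R, hR, h⟩ := hP
  obtain ⟨S, hS, k⟩ := hQ
  refine ⟨fun a n => R a n.unpair.1 && S a n.unpair.2, ?_, fun a => ?_⟩
  · refine comp_and ?_ ?_
    · exact hR.comp Computable.fst (Computable.fst.comp (Computable.unpair.comp Computable.snd))
    · exact hS.comp Computable.fst (Computable.snd.comp (Computable.unpair.comp Computable.snd))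
  · show P a ∧ Q a ↔ _
    rw [h, k]
    constructor
    · rintro ⟨⟨n, hn⟩, ⟨m, hm⟩⟩
      exact ⟨Nat.pair n m, by simp [hn, hm]⟩
    · rintro ⟨n, hn⟩
      simp only [Bool.and_eq_true] at hn
      exact ⟨⟨_, hn.1⟩, ⟨_, hn.2⟩⟩

theorem CEP.or {P Q : α → Prop} (hP : CEP P) (hQ : CEP Q) : CEP (fun a => P a ∨ Q a) := by
  obtain ⟨R, hR, h⟩ := hP
  obtain ⟨S, hS, k⟩ := hQ
  refine ⟨fun a n => R a n || S a n, comp_or hR hS, fun a => ?_⟩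
  show P a ∨ Q a ↔ _
  rw [h, k]
  simp only [Bool.or_eq_true]
  exact exists_or.symm

theorem CEP.ex {P : α × ℕ → Prop} (hP : CEP P) : CEP (fun a => ∃ n, P (a, n)) := by
  obtain ⟨R, hR, h⟩ := hP
  refine ⟨fun a n => R (a, n.unpair.1) n.unpair.2, ?_, fun a => ?_⟩
  · exact hR.comp
      (Computable.fst.pair (Computable.fst.comp (Computable.unpair.comp Computable.snd)))
      (Computable.snd.comp (Computable.unpair.comp Computable.snd))
  · constructor
    · rintro ⟨n, hn⟩
      obtain ⟨m, hm⟩ := (h _).1 hn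
      exact ⟨Nat.pair n m, by simpa using hm⟩
    · rintro ⟨n, hn⟩
      exact ⟨_, (h _).2 ⟨_, hn⟩⟩

theorem CEP.lt {f g : α → ℕ} (hf : Computable f) (hg : Computable g) :
    CEP (fun a => f a < g a) :=
  (CEP.of_bool (comp_lt hf hg)).of_iff (fun a => by simp)

theorem CEP.eq {f g : α → ℕ} (hf : Computable f) (hg : Computable g) :
    CEP (fun a => f a = g a) :=
  (CEP.of_bool (comp_eq hf hg)).of_iff (fun a => by simp)

theorem CEP.ne {f g : α → ℕ} (hf : Computable f) (hg : Computable g) :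
    CEP (fun a => f a ≠ g a) :=
  (CEP.of_bool (comp_not (comp_eq hf hg))).of_iff (fun a => by simp)

theorem CEP.fin {f : α → ℕ} (hf : Computable f) {F : Set ℕ} (hF : F.Finite) :
    CEP (fun a => f a ∈ F) := by
  induction F, hF using Set.Finite.induction_on with
  | empty => exact (CEP.of_bool (Computable.const false)).of_iff (by simp)
  | @insert x s _ _ ih =>
    exact ((CEP.eq hf (Computable.const x)).or ih).of_iff (fun a => by simp)

/-- selection -/
theorem CEP.select {T : α × ℕ → Prop} (hT : CEP T) (H : ∀ a, ∃ x, T (a, x)) :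
    ∃ p : α → ℕ, Computable p ∧ ∀ a, T (a, p a) := by
  obtain ⟨R, hR, h⟩ := hT
  let g : α → ℕ → Option ℕ := fun a n =>
    cond (R (a, n.unpair.1) n.unpair.2) (some n.unpair.1) none
  have hg : Computable₂ g := by
    refine Computable.cond ?_ ?_ (Computable.const none)
    · exact hR.comp
        (Computable.fst.pair (Computable.fst.comp (Computable.unpair.comp Computable.snd)))
        (Computable.snd.comp (Computable.unpair.comp Computable.snd))
    · exact Computable.option_some.comp
        (Computable.fst.comp (Computable.unpair.comp Computable.snd))
  have hgs : ∀ a n x, x ∈ g a n → T (a, x) := by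
    intro a n x hx
    simp only [g] at hx
    cases hc : R (a, n.unpair.1) n.unpair.2 with
    | false => simp [hc] at hx
    | true =>
      simp [hc] at hx
      rw [← hx]
      exact (h _).2 ⟨_, hc⟩
  have hdom : ∀ a, (Nat.rfindOpt (g a)).Dom := by
    intro a
    rw [Nat.rfindOpt_dom]
    obtain ⟨x, hx⟩ := H a
    obtain ⟨m, hm⟩ := (h _).1 hx
    exact ⟨Nat.pair x m, x, by simp [g, hm]⟩
  refine ⟨fun a => (Nat.rfindOpt (g a)).get (hdom a), ?_, fun a => ?_⟩
  · have := Partrec.rfindOpt hg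
    exact this.of_eq (fun a => by simp)
  · obtain ⟨n, hn⟩ := Nat.rfindOpt_spec (Part.get_mem (hdom a))
    exact hgs _ _ _ hn

end CEPsec

/-- membership in the range -/
theorem CEP.ran : CEP (fun a : ℕ × ℕ => a.2 ∈ (phi a.1).ran) := by
  have key : CEP (fun a : ((ℕ × ℕ) × ℕ) × ℕ =>
      Nat.Partrec.Code.evaln a.2 (Denumerable.ofNat Nat.Partrec.Code a.1.1.1) a.1.2
        = some a.1.1.2) := by
    have h1 : Computable (fun a : ((ℕ × ℕ) × ℕ) × ℕ =>
      Nat.Partrec.Code.evaln a.2 (Denumerable.ofNat Nat.Partrec.Code a.1.1.1) a.1.2) :=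
      Nat.Partrec.Code.primrec_evaln.to_comp.comp
        ((Computable.snd.pair ((Computable.ofNat _).comp
          (Computable.fst.comp (Computable.fst.comp Computable.fst)))).pair
          (Computable.snd.comp Computable.fst))
    have h2 : Computable (fun a : ((ℕ × ℕ) × ℕ) × ℕ => some a.1.1.2) :=
      Computable.option_some.comp (Computable.snd.comp (Computable.fst.comp Computable.fst))
    have h3 := comp_eqo h1 h2
    exact (CEP.of_bool h3).of_iff (fun a => by rw [decide_eq_true_iff])
  refine key.ex.ex.of_iff (fun a => ?_)
  simp only [PFun.ran, Set.mem_ofPred_eq, phi, Nat.Partrec.Code.evaln_complete, Option.mem_def]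

theorem CEP.dom : CEP (fun a : ℕ × ℕ => a.2 ∈ WSet a.1) := by
  have key : CEP (fun a : ((ℕ × ℕ) × ℕ) × ℕ =>
      Nat.Partrec.Code.evaln a.2 (Denumerable.ofNat Nat.Partrec.Code a.1.1.1) a.1.1.2
        = some a.1.2) := by
    have h1 : Computable (fun a : ((ℕ × ℕ) × ℕ) × ℕ =>
      Nat.Partrec.Code.evaln a.2 (Denumerable.ofNat Nat.Partrec.Code a.1.1.1) a.1.1.2) :=
      Nat.Partrec.Code.primrec_evaln.to_comp.comp
        ((Computable.snd.pair ((Computable.ofNat _).comp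
          (Computable.fst.comp (Computable.fst.comp Computable.fst)))).pair
          (Computable.snd.comp (Computable.fst.comp Computable.fst)))
    have h2 : Computable (fun a : ((ℕ × ℕ) × ℕ) × ℕ => some a.1.2) :=
      Computable.option_some.comp (Computable.snd.comp Computable.fst)
    have h3 := comp_eqo h1 h2
    exact (CEP.of_bool h3).of_iff (fun a => by rw [decide_eq_true_iff])
  refine key.ex.ex.of_iff (fun a => ?_)
  simp only [WSet, PFun.mem_dom, phi, Nat.Partrec.Code.evaln_complete, Option.mem_def]

/-- uniform indices for ranges -/
theorem CEP.index {P : ℕ × ℕ → Prop} (hP : CEP P) :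
    ∃ g : ℕ → ℕ, Computable g ∧ ∀ n, (phi (g n)).ran = {y | P (n, y)} := by
  obtain ⟨R, hR, h⟩ := hP
  let F : ℕ → Option ℕ := fun m =>
    cond (R (m.unpair.1, m.unpair.2.unpair.1) m.unpair.2.unpair.2)
      (some m.unpair.2.unpair.1) none
  have u1 : Computable (fun m : ℕ => m.unpair.1) := Computable.fst.comp Computable.unpair
  have u2 : Computable (fun m : ℕ => m.unpair.2) := Computable.snd.comp Computable.unpair
  have hF : Computable F :=
    Computable.cond (hR.comp (u1.pair (u1.comp u2)) (u2.comp u2))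
      (Computable.option_some.comp (u1.comp u2)) (Computable.const none)
  have hF' : Nat.Partrec (fun m => (F m : Part ℕ)) := Partrec.nat_iff.1 (Computable.ofOption hF)
  obtain ⟨c, hc⟩ := Nat.Partrec.Code.exists_code.1 hF'
  refine ⟨fun n => Encodable.encode (Nat.Partrec.Code.curry c n), ?_, fun n => ?_⟩
  · exact Computable.encode.comp (Nat.Partrec.Code.primrec₂_curry.to_comp.comp
      (Computable.const c) Computable.id)
  · ext y
    simp only [phi, Denumerable.ofNat_encode, PFun.ran, Set.mem_ofPred_eq,
      Nat.Partrec.Code.eval_curry, hc, h, F, Nat.unpair_pair]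
    constructor
    · rintro ⟨x, hx⟩
      cases hb : R (n, x.unpair.1) x.unpair.2 with
      | false => simp [hb] at hx
      | true =>
        simp [hb] at hx
        subst hx
        exact ⟨_, hb⟩
    · rintro ⟨k, hk⟩
      exact ⟨Nat.pair y k, by simp [hk]⟩

theorem CEP.ceSet {S : ℕ → Prop} (hS : CEP S) : CeSet {y | S y} := by
  obtain ⟨R, hR, h⟩ := hS
  have h1 : Partrec (fun y => Nat.rfind (fun n => (R y n : Part Bool))) :=
    Partrec.rfind hR.partrec₂
  obtain ⟨c, hc⟩ := Nat.Partrec.Code.exists_code.1 (Partrec.nat_iff.1 h1)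
  refine ⟨Encodable.encode c, ?_⟩
  ext y
  have h2 : y ∈ WSet (Encodable.encode c) ↔
      (Nat.rfind (fun n => (R y n : Part Bool))).Dom := by
    show (phi (Encodable.encode c) y).Dom ↔ _
    rw [phi, Denumerable.ofNat_encode, hc]
  rw [h2, Set.mem_ofPred_eq, h]
  refine Iff.trans ?_ Nat.rfind_dom.symm
  constructor
  · rintro ⟨n, hn⟩
    exact ⟨n, by simp [hn], by simp⟩
  · rintro ⟨n, hn, _⟩
    exact ⟨n, by simpa using hn⟩

theorem halting_not_co : ¬ CEP (fun n => n ∉ WSet n) := by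
  intro h
  obtain ⟨e, he⟩ := h.ceSet
  have := Set.ext_iff.1 he e
  simp at this

theorem halting_ce : CEP (fun n => n ∈ WSet n) :=
  CEP.dom.comp (Computable.id.pair Computable.id)

/-! ### Computable maps on cohesive sets -/

/-- Parity of the length of the descending orbit. -/
def colr (p : ℕ → ℕ) (n : ℕ) : Bool :=
  if _h : p n < n then ! colr p (p n) else false
termination_by n

theorem colr_comp {p : ℕ → ℕ} (hp : Computable p) : Computable (colr p) := by
  let g : Unit → List Bool → Option Bool := fun _ l =>
    some (cond (decide (p l.length < l.length)) (! l.getD (p l.length) false) false)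
  have hl : Computable (fun a : Unit × List Bool => a.2.length) :=
    Computable.list_length.comp Computable.snd
  have hg : Computable₂ g := by
    refine Computable.option_some.comp (Computable.cond (comp_lt (hp.comp hl) hl) (comp_not ?_)
      (Computable.const false))
    exact (Primrec.list_getD false).to_comp.comp Computable.snd (hp.comp hl)
  have := Computable.nat_strong_rec (fun _ : Unit => colr p) hg (by
    intro _ n
    simp only [g, List.length_map, List.length_range]
    rw [colr]
    by_cases h : p n < n
    · simp [h]
    · simp [h])
  exact this.comp (Computable.const ()) Computable.id

/-- Cohesiveness of the complement of `A`. -/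
def Coh (A : Set ℕ) : Prop :=
  ∀ P : ℕ → Prop, CEP P → {y | P y ∧ y ∉ A}.Finite ∨ {y | ¬ P y ∧ y ∉ A}.Finite

theorem no_regressive {A : Set ℕ} (hinf : {y | y ∉ A}.Infinite) (hcoh : Coh A)
    {p : ℕ → ℕ} (hp : Computable p) {F : Set ℕ} (hF : F.Finite)
    (h1 : ∀ y, y ∉ A → y ∉ F → p y ∉ A ∧ p y < y)
    (h2 : ∀ x, x ∉ A → {y | y ∉ A ∧ y ∉ F ∧ p y = x}.Finite) : False := by
  have key : ∃ b, {y | colr p y = b ∧ y ∉ A}.Finite := by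
    rcases hcoh _ (CEP.of_bool (colr_comp hp)) with h | h
    · exact ⟨true, h⟩
    · exact ⟨false, by simpa using h⟩
  obtain ⟨b, hb⟩ := key
  apply hinf
  have hU : (F ∪ {y | colr p y = b ∧ y ∉ A} ∪
      ⋃ x ∈ {y | colr p y = b ∧ y ∉ A}, {y | y ∉ A ∧ y ∉ F ∧ p y = x}).Finite := by
    refine (hF.union hb).union (Set.Finite.biUnion hb ?_)
    intro x hx
    exact h2 x hx.2
  refine hU.subset ?_
  intro y hy
  by_cases hyF : y ∈ F
  · exact Or.inl (Or.inl hyF)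
  by_cases hyb : colr p y = b
  · exact Or.inl (Or.inr ⟨hyb, hy⟩)
  right
  obtain ⟨h3, h4⟩ := h1 y hy hyF
  have h5 : colr p (p y) = b := by
    rw [colr, dif_pos h4] at hyb
    revert hyb
    cases colr p (p y) <;> cases b <;> simp
  simp only [Set.mem_iUnion]
  exact ⟨p y, ⟨h5, h3⟩, hy, hyF, rfl⟩

/-- Block structure: (block index, threshold, running sum). -/
def blk (p : ℕ → ℕ) : ℕ → ℕ × ℕ × ℕ
  | 0 => (0, 0, p 0)
  | z + 1 => cond (decide ((blk p z).2.1 < z + 1))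
      ((blk p z).1 + 1, (blk p z).2.2, (blk p z).2.2 + p (z + 1))
      ((blk p z).1, (blk p z).2.1, (blk p z).2.2 + p (z + 1))

theorem blk_comp {p : ℕ → ℕ} (hp : Computable p) : Computable (blk p) := by
  let h : ℕ → ℕ × (ℕ × ℕ × ℕ) → ℕ × ℕ × ℕ := fun _ a =>
    cond (decide (a.2.2.1 < a.1 + 1))
      (a.2.1 + 1, a.2.2.2, a.2.2.2 + p (a.1 + 1))
      (a.2.1, a.2.2.1, a.2.2.2 + p (a.1 + 1))
  have c1 : Computable (fun a : ℕ × (ℕ × (ℕ × ℕ × ℕ)) => a.2.1 + 1) :=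
    Computable.succ.comp (Computable.fst.comp Computable.snd)
  have c2 : Computable (fun a : ℕ × (ℕ × (ℕ × ℕ × ℕ)) => a.2.2.1) :=
    Computable.fst.comp (Computable.snd.comp Computable.snd)
  have c3 : Computable (fun a : ℕ × (ℕ × (ℕ × ℕ × ℕ)) => a.2.2.2.1) :=
    Computable.fst.comp (Computable.snd.comp (Computable.snd.comp Computable.snd))
  have c4 : Computable (fun a : ℕ × (ℕ × (ℕ × ℕ × ℕ)) => a.2.2.2.2) :=
    Computable.snd.comp (Computable.snd.comp (Computable.snd.comp Computable.snd))
  have c5 : Computable (fun a : ℕ × (ℕ × (ℕ × ℕ × ℕ)) => a.2.2.2.2 + p (a.2.1 + 1)) :=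
    Primrec.nat_add.to_comp.comp c4 (hp.comp c1)
  have hh : Computable₂ h :=
    Computable.cond (comp_lt c3 c1) ((Computable.succ.comp c2).pair (c4.pair c5))
      (c2.pair (c3.pair c5))
  refine (Computable.nat_rec Computable.id (Computable.const ((0, 0, p 0) : ℕ × ℕ × ℕ)) hh).of_eq ?_
  intro n
  induction n with
  | zero => rfl
  | succ n ih =>
    simp only [id] at ih ⊢
    rw [blk, ← ih]

theorem blk_sum (p : ℕ → ℕ) (y z : ℕ) (h : y ≤ z) : p y ≤ (blk p z).2.2 := by
  induction z with
  | zero =>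
    obtain rfl : y = 0 := by omega
    simp [blk]
  | succ z ih =>
    have e : (blk p (z+1)).2.2 = (blk p z).2.2 + p (z+1) := by
      rw [blk]
      cases decide ((blk p z).2.1 < z + 1) <;> rfl
    rw [e]
    rcases Nat.lt_or_ge y (z+1) with h' | h'
    · have := ih (by omega)
      omega
    · obtain rfl : y = z + 1 := by omega
      omega

theorem blk_step (p : ℕ → ℕ) (z : ℕ) :
    ((blk p z).2.1 < z + 1 ∧ (blk p (z+1)).1 = (blk p z).1 + 1 ∧
      (blk p (z+1)).2.1 = (blk p z).2.2) ∨
    (z + 1 ≤ (blk p z).2.1 ∧ (blk p (z+1)).1 = (blk p z).1 ∧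
      (blk p (z+1)).2.1 = (blk p z).2.1) := by
  by_cases h : (blk p z).2.1 < z + 1
  · left
    rw [blk]
    simp [h]
  · right
    rw [blk]
    simp [h]
    omega

theorem blk_next (p : ℕ → ℕ) (y z : ℕ) (h : y ≤ z) (hz : z ≤ p y) :
    (blk p z).1 = (blk p y).1 ∨
      ((blk p z).1 = (blk p y).1 + 1 ∧ p y ≤ (blk p z).2.1) := by
  induction z, h using Nat.le_induction with
  | base => exact Or.inl rfl
  | succ z hyz ih =>
    have h1 := blk_sum p y z hyz
    have h2 := blk_step p z
    have := ih (by omega)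
    omega

theorem blk_mono (p : ℕ → ℕ) (y z : ℕ) (h : y ≤ z) : (blk p y).1 ≤ (blk p z).1 := by
  induction z, h using Nat.le_induction with
  | base => exact le_rfl
  | succ z hyz ih =>
    have h2 := blk_step p z
    omega

theorem no_progressive {A : Set ℕ} (hinf : {y | y ∉ A}.Infinite) (hcoh : Coh A)
    {p : ℕ → ℕ} (hp : Computable p) {F : Set ℕ} (hF : F.Finite)
    (h1 : ∀ y, y ∉ A → y ∉ F → p y ∉ A ∧ y < p y) : False := by
  have hpar : Computable (fun y => decide ((blk p y).1 % 2 = 1)) :=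
    comp_eq (Primrec.nat_mod.to_comp.comp (Computable.fst.comp (blk_comp hp))
      (Computable.const 2)) (Computable.const 1)
  have key : ∃ b, {y | (blk p y).1 % 2 ≠ b ∧ y ∉ A}.Finite := by
    rcases hcoh _ (CEP.of_bool hpar) with h | h
    · refine ⟨0, h.subset ?_⟩
      rintro y ⟨hy, hy'⟩
      exact ⟨by simp only [decide_eq_true_eq]; omega, hy'⟩
    · refine ⟨1, h.subset ?_⟩
      rintro y ⟨hy, hy'⟩
      exact ⟨by simpa using hy, hy'⟩
  obtain ⟨b, hb⟩ := key
  obtain ⟨N, hN⟩ := (hF.union hb).bddAbove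
  obtain ⟨y0, hy0, hy0N⟩ := hinf.exists_gt N
  have good : ∀ y, y ∉ A → N < y →
      p y ∉ A ∧ N < p y ∧ y < p y ∧ (blk p (p y)).1 = (blk p y).1 := by
    intro y hy hyN
    have hyF : y ∉ F := fun h => by
      have := hN (Or.inl h)
      omega
    obtain ⟨h3, h4⟩ := h1 y hy hyF
    have par : ∀ z, z ∉ A → N < z → (blk p z).1 % 2 = b := by
      intro z hz hzN
      by_contra hc
      have := hN (Or.inr ⟨hc, hz⟩)
      omega
    have e1 := par y hy hyN
    have e2 := par (p y) h3 (by omega)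
    have e3 := blk_next p y (p y) h4.le le_rfl
    exact ⟨h3, by omega, h4, by omega⟩
  have orb : ∀ k, ∃ z, z ∉ A ∧ N < z ∧ y0 + k ≤ z ∧ (blk p z).1 = (blk p y0).1 := by
    intro k
    induction k with
    | zero => exact ⟨y0, hy0, hy0N, by omega, rfl⟩
    | succ k ih =>
      obtain ⟨z, a1, a2, a3, a4⟩ := ih
      obtain ⟨b1, b2, b3, b4⟩ := good z a1 a2
      exact ⟨p z, b1, b2, by omega, by omega⟩
  have const : ∀ k, (blk p (y0 + k)).1 = (blk p y0).1 := by
    intro k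
    obtain ⟨z, a1, a2, a3, a4⟩ := orb k
    have := blk_mono p y0 (y0 + k) (by omega)
    have := blk_mono p (y0 + k) z a3
    omega
  have thr : ∀ k, y0 + k + 1 ≤ (blk p y0).2.1 ∧ (blk p (y0 + k)).2.1 = (blk p y0).2.1 := by
    intro k
    induction k with
    | zero =>
      have a1 := blk_step p y0
      have a2 := const 1
      exact ⟨by omega, rfl⟩
    | succ k ih =>
      have a1 := blk_step p (y0 + k)
      have a2 := const k
      have a3 := const (k + 1)
      have a4 := blk_step p (y0 + k + 1)
      have a5 := const (k + 1 + 1)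
      simp only [← add_assoc] at *
      omega
  have := (thr (blk p y0).2.1).1
  omega

/-! ### The saturated sets -/

/-- The `E_A`-saturation of the range of `φ_e`. -/
def MM (A : Set ℕ) (e : ℕ) : Set ℕ := {x | ∃ k ∈ (phi e).ran, EA A k x}

theorem EA_symm {A : Set ℕ} {x y : ℕ} (h : EA A x y) : EA A y x := by
  rcases h with h | h
  · exact Or.inl h.symm
  · exact Or.inr ⟨h.2, h.1⟩

theorem EA_trans {A : Set ℕ} {x y z : ℕ} (h : EA A x y) (h' : EA A y z) : EA A x z := by
  rcases h with h | h
  · rw [h]; exact h'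
  · rcases h' with h' | h'
    · rw [← h']; exact Or.inr h
    · exact Or.inr ⟨h.1, h'.2⟩

theorem classOf_eq_iff {A : Set ℕ} {x y : ℕ} :
    classOf (EA A) x = classOf (EA A) y ↔ EA A x y := by
  constructor
  · intro h
    have : y ∈ classOf (EA A) y := Or.inl rfl
    rw [← h] at this
    exact this
  · intro h
    ext z
    exact ⟨fun hz => EA_trans (EA_symm h) hz, fun hz => EA_trans h hz⟩

theorem mem_MM_iff {A : Set ℕ} {e x : ℕ} :
    x ∈ MM A e ↔ classOf (EA A) x ∈ classOf (EA A) '' (phi e).ran := by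
  constructor
  · rintro ⟨k, hk, h⟩
    exact ⟨k, hk, classOf_eq_iff.2 h⟩
  · rintro ⟨k, hk, h⟩
    exact ⟨k, hk, classOf_eq_iff.1 h⟩

theorem fs_iff {A : Set ℕ} {e e' : ℕ} : FSJump (EA A) e e' ↔ MM A e = MM A e' := by
  constructor
  · intro h
    ext x
    rw [mem_MM_iff, mem_MM_iff, h]
  · intro h
    have aux : ∀ a b, MM A a = MM A b →
        classOf (EA A) '' (phi a).ran ⊆ classOf (EA A) '' (phi b).ran := by
      rintro a b hab _ ⟨k, hk, rfl⟩
      rw [← mem_MM_iff, ← hab]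
      exact ⟨k, hk, Or.inl rfl⟩
    exact Set.Subset.antisymm (aux _ _ h) (aux _ _ h.symm)

theorem MM_sat {A : Set ℕ} {e x y : ℕ} (hx : x ∈ MM A e) (hxA : x ∈ A) (hy : y ∈ A) :
    y ∈ MM A e := by
  obtain ⟨k, hk, h⟩ := hx
  exact ⟨k, hk, EA_trans h (Or.inr ⟨hxA, hy⟩)⟩

theorem MM_eq {A S : Set ℕ} {e : ℕ} (h : (phi e).ran = S)
    (hS : ∀ x ∈ S, x ∈ A → A ⊆ S) : MM A e = S := by
  ext x
  simp only [MM, Set.mem_ofPred_eq, h]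
  constructor
  · rintro ⟨k, hk, rfl | h⟩
    · exact hk
    · exact hS k hk h.1 h.2
  · intro hx
    exact ⟨x, hx, Or.inl rfl⟩

/-- A computable self-reduction of the jump, for `A` with cohesive complement. -/
structure Setup (A : Set ℕ) (f : ℕ → ℕ) : Prop where
  ce : CEP (fun y => y ∈ A)
  inf : {y | y ∉ A}.Infinite
  coh : Coh A
  cf : Computable f
  red : ∀ m n, MM A m = MM A n ↔ MM A (f m) = MM A (f n)

theorem MM_ce {A : Set ℕ} (hA : CEP (fun y => y ∈ A)) :
    CEP (fun a : ℕ × ℕ => a.2 ∈ MM A a.1) := by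
  have h1 : CEP (fun a : (ℕ × ℕ) × ℕ => a.2 ∈ (phi a.1.1).ran) :=
    CEP.ran.comp ((Computable.fst.comp Computable.fst).pair Computable.snd)
  have h2 : CEP (fun a : (ℕ × ℕ) × ℕ => a.2 = a.1.2) :=
    CEP.eq Computable.snd (Computable.snd.comp Computable.fst)
  have h3 : CEP (fun a : (ℕ × ℕ) × ℕ => a.2 ∈ A) := hA.comp Computable.snd
  have h4 : CEP (fun a : (ℕ × ℕ) × ℕ => a.1.2 ∈ A) :=
    hA.comp (Computable.snd.comp Computable.fst)
  exact (h1.and (h2.or (h3.and h4))).ex.of_iff (fun a => Iff.rfl)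

theorem exists_idx {A S : Set ℕ} (hS : CEP (fun y => y ∈ S))
    (h : ∀ x ∈ S, x ∈ A → A ⊆ S) : ∃ e, MM A e = S := by
  obtain ⟨g, -, hg⟩ := (hS.comp (Computable.snd (α := ℕ) (β := ℕ))).index
  exact ⟨g 0, MM_eq (hg 0) h⟩

namespace Setup
variable {A : Set ℕ} {f : ℕ → ℕ}

theorem mono (H : Setup A f) {i j : ℕ} (hij : MM A i ⊆ MM A j) :
    MM A (f i) ⊆ MM A (f j) := by
  intro x hx
  by_contra hxj
  have hP : CEP (fun a : ℕ × ℕ => a.2 ∈ MM A i ∨ (a.1 ∈ WSet a.1 ∧ a.2 ∈ MM A j)) :=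
    ((MM_ce H.ce).comp ((Computable.const i).pair Computable.snd)).or
      ((halting_ce.comp Computable.fst).and
        ((MM_ce H.ce).comp ((Computable.const j).pair Computable.snd)))
  obtain ⟨g, hg, hgr⟩ := hP.index
  have hM : ∀ n, MM A (g n) = {y | y ∈ MM A i ∨ (n ∈ WSet n ∧ y ∈ MM A j)} := by
    intro n
    refine MM_eq (hgr n) ?_
    rintro z (hz | ⟨hn, hz⟩) hzA y hy
    · exact Or.inl (MM_sat hz hzA hy)
    · exact Or.inr ⟨hn, MM_sat hz hzA hy⟩
  apply halting_not_co
  refine ((MM_ce H.ce).comp ((H.cf.comp hg).pair (Computable.const x))).of_iff ?_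
  intro n
  by_cases hn : n ∈ WSet n
  · have : MM A (g n) = MM A j := by
      rw [hM]; ext y
      simp only [hn, true_and, Set.mem_ofPred_eq]
      exact ⟨fun h => h.elim (fun h => hij h) id, Or.inr⟩
    simp only [hn, not_true_eq_false, false_iff]
    rw [(H.red _ _).1 this]
    exact hxj
  · have : MM A (g n) = MM A i := by
      rw [hM]; ext y
      simp [hn]
    simp only [hn, not_false_eq_true, true_iff]
    rw [(H.red _ _).1 this]
    exact hx

/-- Saturated sets with prescribed trace outside a finite set are finitely many. -/
theorem finite_trace (A : Set ℕ) {F : Set ℕ} (hF : F.Finite) (G : Set ℕ) :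
    {X | (∃ e, X = MM A e) ∧ ∀ z, z ∉ A → z ∉ F → (z ∈ X ↔ z ∈ G)}.Finite := by
  have hfin : ((𝒫 F) ×ˢ (Set.univ : Set Prop)).Finite :=
    hF.finite_subsets.prod Set.finite_univ
  refine Set.Finite.of_finite_image (f := fun X : Set ℕ => (X ∩ F, ∃ y ∈ A, y ∈ X))
    (hfin.subset ?_) ?_
  · rintro _ ⟨X, -, rfl⟩
    exact ⟨Set.inter_subset_right, trivial⟩
  · rintro X ⟨⟨e, rfl⟩, hX⟩ Y ⟨⟨e', rfl⟩, hY⟩ hXY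
    simp only [Prod.mk.injEq] at hXY
    obtain ⟨h1, h2⟩ := hXY
    ext z
    by_cases hzA : z ∈ A
    · constructor
      · intro hz
        obtain ⟨y, hy, hy'⟩ := h2.mp ⟨z, hzA, hz⟩
        exact MM_sat hy' hy hzA
      · intro hz
        obtain ⟨y, hy, hy'⟩ := h2.mpr ⟨z, hzA, hz⟩
        exact MM_sat hy' hy hzA
    · by_cases hzF : z ∈ F
      · have := Set.ext_iff.1 h1 z
        simpa [hzF] using this
      · rw [hX z hzA hzF, hY z hzA hzF]

/-- An infinite family of classes has images with infinitely many traces. -/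
theorem finite_of_trace (H : Setup A f) {F : Set ℕ} (hF : F.Finite) (G : Set ℕ)
    {B : Set ℕ} (u : ℕ → ℕ) (hu : ∀ x ∈ B, ∀ y ∈ B, MM A (u x) = MM A (u y) → x = y)
    (hB : ∀ x ∈ B, ∀ z, z ∉ A → z ∉ F → (z ∈ MM A (f (u x)) ↔ z ∈ G)) : B.Finite := by
  refine Set.Finite.of_finite_image (f := fun x => MM A (f (u x)))
    ((finite_trace A hF G).subset ?_) ?_
  · rintro _ ⟨x, hx, rfl⟩
    exact ⟨⟨_, rfl⟩, hB x hx⟩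
  · intro x hx y hy hxy
    exact hu x hx y hy ((H.red _ _).2 hxy)

theorem fin_image (H : Setup A f) {i : ℕ} (hi : {z | z ∉ A ∧ z ∉ MM A i}.Infinite) :
    {z | z ∈ MM A (f i) ∧ z ∉ A}.Finite := by
  rcases H.coh _ ((MM_ce H.ce).comp ((Computable.const (f i)).pair Computable.id)) with h | h
  · exact h
  exfalso
  have hx : ∀ x, ∃ e, x ∉ A → MM A e = insert x (MM A i) := by
    intro x
    by_cases hxA : x ∈ A
    · exact ⟨0, fun h => absurd hxA h⟩
    · obtain ⟨e, he⟩ := exists_idx (A := A) (S := insert x (MM A i))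
        ((CEP.eq Computable.id (Computable.const x)).or
          ((MM_ce H.ce).comp ((Computable.const i).pair Computable.id))) (by
          rintro z (rfl | hz) hzA y hy
          · exact absurd hzA hxA
          · exact Or.inr (MM_sat hz hzA hy))
      exact ⟨e, fun _ => he⟩
  choose u hu using hx
  apply hi
  refine H.finite_of_trace h (Set.univ) u ?_ ?_
  · rintro x ⟨hx, hx'⟩ y ⟨hy, hy'⟩ hxy
    rw [hu x hx, hu y hy] at hxy
    have : x ∈ insert y (MM A i) := by rw [← hxy]; exact Or.inl rfl
    rcases this with h | h
    · exact h
    · exact absurd h hx'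
  · rintro x ⟨hx, hx'⟩ z hz hzF
    simp only [Set.mem_univ, iff_true]
    have h1 : z ∈ MM A (f i) := by
      by_contra hc
      exact hzF ⟨hc, hz⟩
    refine H.mono ?_ h1
    rw [hu x hx]
    exact Set.subset_insert _ _

theorem exists_u (H : Setup A f) : ∃ u : ℕ → ℕ, Computable u ∧ ∀ x, MM A (u x) = insert x A := by
  have hP : CEP (fun a : ℕ × ℕ => a.2 = a.1 ∨ a.2 ∈ A) :=
    (CEP.eq Computable.snd Computable.fst).or (H.ce.comp Computable.snd)
  obtain ⟨g, hg, hgr⟩ := hP.index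
  exact ⟨g, hg, fun x => MM_eq (S := insert x A) (hgr x) (fun _ _ _ => Set.subset_insert _ _)⟩

theorem main_step (H : Setup A f) {u : ℕ → ℕ} (hu : Computable u)
    (huM : ∀ x, MM A (u x) = insert x A) :
    {y | y ∉ A ∧ ∃ x, x ≠ y ∧ y ∈ MM A (f (u x))}.Finite := by
  obtain ⟨α, hα⟩ := exists_idx (A := A) (S := A) H.ce (fun _ _ _ => le_rfl)
  have hαf : {z | z ∈ MM A (f α) ∧ z ∉ A}.Finite := by
    refine H.fin_image ?_
    rw [hα]
    simpa using H.inf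
  have huf : ∀ x, {z | z ∈ MM A (f (u x)) ∧ z ∉ A}.Finite := by
    intro x
    refine H.fin_image ?_
    rw [huM]
    refine (H.inf.sdiff (Set.finite_singleton x)).mono ?_
    rintro z ⟨hz, hz'⟩
    refine ⟨hz, ?_⟩
    rintro (h | h)
    · exact hz' h
    · exact hz h
  have huA : ∀ x ∈ A, MM A (f (u x)) = MM A (f α) := by
    intro x hx
    apply (H.red _ _).1
    rw [hα, huM, Set.insert_eq_of_mem hx]
  -- general reduction
  have gen : ∀ T : ℕ × ℕ → Prop, CEP T →
      (∀ p : ℕ → ℕ, Computable p → ∀ F : Set ℕ, F.Finite →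
        (∀ y, y ∉ A → y ∉ F → p y ∉ A ∧ T (y, p y) ∧ y ∈ MM A (f (u (p y)))) → False) →
      {y | (∃ x, T (y, x) ∧ y ∈ MM A (f (u x))) ∧ y ∉ A}.Finite := by
    intro T hT hno
    have hT' : CEP (fun a : ℕ × ℕ => T a ∧ a.1 ∈ MM A (f (u a.2))) :=
      hT.and ((MM_ce H.ce).comp ((H.cf.comp (hu.comp Computable.snd)).pair Computable.fst))
    rcases H.coh _ hT'.ex with h | h
    · exact h
    exfalso
    have hT2 := hT'.or ((H.ce.comp (Computable.fst (α := ℕ) (β := ℕ))).or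
      (CEP.fin (Computable.fst (α := ℕ) (β := ℕ)) h))
    obtain ⟨p, hp, hpT⟩ := hT2.select (by
      intro y
      by_cases hy : y ∈ A
      · exact ⟨0, Or.inr (Or.inl hy)⟩
      · by_cases hy2 : ∃ x, T (y, x) ∧ y ∈ MM A (f (u x))
        · obtain ⟨x, hx⟩ := hy2
          exact ⟨x, Or.inl hx⟩
        · exact ⟨0, Or.inr (Or.inr ⟨hy2, hy⟩)⟩)
    refine hno p hp _ (h.union hαf) ?_
    intro y hy hyF
    rcases hpT y with h1 | h1 | h1
    · refine ⟨?_, h1⟩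
      intro hpA
      apply hyF
      right
      refine ⟨?_, hy⟩
      rw [← huA _ hpA]
      exact h1.2
    · exact absurd h1 hy
    · exact absurd (Or.inl h1) hyF
  have r1 := gen (fun a => a.2 < a.1) (CEP.lt Computable.snd Computable.fst) (by
    intro p hp F hF h
    refine no_regressive H.inf H.coh hp hF (fun y hy hyF => ⟨(h y hy hyF).1, (h y hy hyF).2.1⟩) ?_
    intro x _
    refine (huf x).subset ?_
    rintro y ⟨hy, hyF, rfl⟩
    exact ⟨(h y hy hyF).2.2, hy⟩)
  have r2 := gen (fun a => a.1 < a.2) (CEP.lt Computable.fst Computable.snd) (by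
    intro p hp F hF h
    exact no_progressive H.inf H.coh hp hF (fun y hy hyF => ⟨(h y hy hyF).1, (h y hy hyF).2.1⟩))
  refine (r1.union r2).subset ?_
  rintro y ⟨hy, x, hxy, hx⟩
  rcases Nat.lt_or_gt_of_ne hxy with h | h
  · exact Or.inl ⟨⟨x, h, hx⟩, hy⟩
  · exact Or.inr ⟨⟨x, h, hx⟩, hy⟩

theorem exists_s (x : ℕ) (hx : x ∉ A) : ∃ e, MM A e = {x} :=
  exists_idx (A := A) (S := {x}) ((CEP.eq Computable.id (Computable.const x)).of_iff (fun _ => Iff.rfl))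
    (by rintro z rfl hz; exact absurd hz hx)

theorem step_one (H : Setup A f) :
    {x | x ∉ A ∧ ∃ e, MM A e = {x} ∧ x ∉ MM A (f e)}.Finite := by
  obtain ⟨u, hu, huM⟩ := H.exists_u
  have hF := H.main_step hu huM
  have hs : ∀ x, ∃ e, x ∉ A → MM A e = {x} := by
    intro x
    by_cases hx : x ∈ A
    · exact ⟨0, fun h => absurd hx h⟩
    · obtain ⟨e, he⟩ := exists_s x hx
      exact ⟨e, fun _ => he⟩
  choose s hs using hs
  refine H.finite_of_trace hF ∅ s ?_ ?_
  · rintro x ⟨hx, -⟩ y ⟨hy, -⟩ hxy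
    rw [hs x hx, hs y hy] at hxy
    exact Set.singleton_injective hxy
  · rintro x ⟨hx, e, he, hxe⟩ z hz hzF
    simp only [Set.mem_empty_iff_false, iff_false]
    intro hzm
    by_cases hzx : x = z
    · subst hzx
      apply hxe
      rw [(H.red e (s x)).1 (by rw [he, hs x hx])]
      exact hzm
    · apply hzF
      refine ⟨hz, x, hzx, H.mono ?_ hzm⟩
      rw [hs x hx, huM]
      intro w hw
      exact Or.inl hw

/-- bounded search -/
def bsearch (R : ℕ → ℕ → Bool) (n y : ℕ) : Bool :=
  Nat.rec (motive := fun _ => Bool) false (fun k ih => ih || R n k) y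

theorem bsearch_iff (R : ℕ → ℕ → Bool) (n y : ℕ) :
    bsearch R n y = true ↔ ∃ k < y, R n k = true := by
  induction y with
  | zero => simp [bsearch]
  | succ y ih =>
    have : bsearch R n (y+1) = (bsearch R n y || R n y) := rfl
    rw [this, Bool.or_eq_true, ih]
    constructor
    · rintro (⟨k, hk, h⟩ | h)
      · exact ⟨k, by omega, h⟩
      · exact ⟨y, by omega, h⟩
    · rintro ⟨k, hk, h⟩
      rcases Nat.lt_or_ge k y with h' | h'
      · exact Or.inl ⟨k, h', h⟩
      · obtain rfl : k = y := by omega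
        exact Or.inr h

theorem bsearch_comp {R : ℕ → ℕ → Bool} (hR : Computable₂ R) :
    Computable (fun a : ℕ × ℕ => bsearch R a.1 a.2) := by
  have hh : Computable₂ (fun (a : ℕ × ℕ) (b : ℕ × Bool) => b.2 || R a.1 b.1) :=
    comp_or (Computable.snd.comp Computable.snd)
      (hR.comp (Computable.fst.comp Computable.fst) (Computable.fst.comp Computable.snd))
  exact Computable.nat_rec Computable.snd (Computable.const false) hh

theorem continuity (H : Setup A f) {ω : ℕ} (hω : MM A ω = Set.univ) {x : ℕ}
    (hx : x ∈ MM A (f ω)) :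
    ∃ N : ℕ, ∀ e, (∀ y, y < N ∨ y ∈ A → y ∈ MM A e) → x ∈ MM A (f e) := by
  by_contra hcon
  push Not at hcon
  obtain ⟨R, hR, hK⟩ := halting_ce
  have hP : CEP (fun a : ℕ × ℕ => a.2 ∈ A ∨ (! bsearch R a.1 a.2) = true) :=
    (H.ce.comp Computable.snd).or (CEP.of_bool (comp_not (bsearch_comp hR)))
  obtain ⟨g, hg, hgr⟩ := hP.index
  have hM : ∀ n, MM A (g n) = {y | y ∈ A ∨ (! bsearch R n y) = true} := fun n =>
    MM_eq (hgr n) (fun _ _ _ z hz => Or.inl hz)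
  apply halting_not_co
  refine ((MM_ce H.ce).comp ((H.cf.comp hg).pair (Computable.const x))).of_iff ?_
  intro n
  by_cases hn : n ∈ WSet n
  · obtain ⟨k, hk⟩ := (hK n).1 hn
    obtain ⟨e, he, hxe⟩ := hcon (k + 1)
    simp only [hn, not_true_eq_false, false_iff]
    intro hx'
    apply hxe
    refine H.mono ?_ hx'
    rw [hM]
    rintro y (hy | hy)
    · exact he y (Or.inr hy)
    · apply he
      left
      by_contra hc
      have := (bsearch_iff R n y).2 ⟨k, by omega, hk⟩
      simp [this] at hy
  · simp only [hn, not_false_eq_true, true_iff]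
    have : MM A (g n) = MM A ω := by
      rw [hM, hω]
      ext y
      simp only [Set.mem_ofPred_eq, Set.mem_univ, iff_true]
      right
      rw [Bool.not_eq_true', Bool.eq_false_iff]
      intro hb
      obtain ⟨k, -, hk⟩ := (bsearch_iff R n y).1 hb
      exact hn ((hK n).2 ⟨k, hk⟩)
    rw [(H.red _ _).1 this]
    exact hx

theorem continuity_fin (H : Setup A f) {ω : ℕ} (hω : MM A ω = Set.univ) {G : Set ℕ}
    (hG : G.Finite) (hx : G ⊆ MM A (f ω)) :
    ∃ N : ℕ, ∀ e, (∀ y, y < N ∨ y ∈ A → y ∈ MM A e) → G ⊆ MM A (f e) := by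
  induction G, hG using Set.Finite.induction_on with
  | empty => exact ⟨0, fun e _ => Set.empty_subset _⟩
  | @insert a s _ _ ih =>
    obtain ⟨N, hN⟩ := ih ((Set.subset_insert _ _).trans hx)
    obtain ⟨N', hN'⟩ := H.continuity hω (hx (Set.mem_insert _ _))
    refine ⟨max N N', fun e he => Set.insert_subset (hN' e ?_) (hN e ?_)⟩
    · rintro y (hy | hy)
      · exact he y (Or.inl (by omega))
      · exact he y (Or.inr hy)
    · rintro y (hy | hy)
      · exact he y (Or.inl (by omega))
      · exact he y (Or.inr hy)

theorem step_two (H : Setup A f) :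
    {c | c ∉ A ∧ ∃ e, MM A e = {c}ᶜ ∧ c ∈ MM A (f e)}.Finite := by
  obtain ⟨ω, hω⟩ := exists_idx (A := A) (S := Set.univ)
    ((CEP.of_bool (Computable.const true)).of_iff (by simp)) (fun _ _ _ => Set.subset_univ _)
  have hF := H.step_one
  set F := {x | x ∉ A ∧ ∃ e, MM A e = {x} ∧ x ∉ MM A (f e)} with hFdef
  obtain ⟨N, hN⟩ := H.continuity_fin hω (G := F ∩ MM A (f ω)) (hF.subset Set.inter_subset_left)
    Set.inter_subset_right
  have hA' : ∃ N : ℕ, ∀ e, (∀ y, y < N ∨ y ∈ A → y ∈ MM A e) →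
      ∀ y ∈ A, y ∈ MM A (f ω) → y ∈ MM A (f e) := by
    by_cases h : ∃ a ∈ A, a ∈ MM A (f ω)
    · obtain ⟨a, ha, ha'⟩ := h
      obtain ⟨N, hN⟩ := H.continuity hω ha'
      exact ⟨N, fun e he y hy _ => MM_sat (hN e he) ha hy⟩
    · exact ⟨0, fun e _ y hy hy' => absurd ⟨y, hy, hy'⟩ h⟩
  obtain ⟨N', hN'⟩ := hA'
  refine (hF.union (Set.finite_le_nat (max N N'))).subset ?_
  rintro c ⟨hcA, e, he, hce⟩
  by_contra hc
  have hcF : c ∉ F := fun h => hc (Or.inl h)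
  have hcN : max N N' < c := by
    by_contra h
    exact hc (Or.inr (Nat.le_of_not_lt h))
  have hsub : ∀ M ≤ max N N', ∀ y, y < M ∨ y ∈ A → y ∈ MM A e := by
    rintro M hM y hy
    rw [he]
    rintro rfl
    rcases hy with hy | hy
    · omega
    · exact hcA hy
  have h1 := hN e (hsub N (le_max_left _ _))
  have h2 := hN' e (hsub N' (le_max_right _ _))
  have hsup : MM A (f ω) ⊆ MM A (f e) := by
    intro z hz
    by_cases hzA : z ∈ A
    · exact h2 z hzA hz
    by_cases hzF : z ∈ F
    · exact h1 ⟨hzF, hz⟩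
    by_cases hzc : z = c
    · rw [hzc]; exact hce
    obtain ⟨i, hi⟩ := exists_s z hzA
    have hzi : z ∈ MM A (f i) := by
      by_contra hc
      exact hzF ⟨hzA, i, hi, hc⟩
    refine H.mono ?_ hzi
    rw [hi, he]
    rintro w rfl
    exact hzc
  have heq : MM A e = MM A ω := by
    apply (H.red _ _).2
    refine Set.Subset.antisymm (H.mono ?_) hsup
    rw [hω]
    exact Set.subset_univ _
  have : c ∈ MM A e := by rw [heq, hω]; trivial
  rw [he] at this
  exact this rfl

theorem final (H : Setup A f) (t : ℕ) : ∃ e, MM A (f e) = MM A t := by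
  have h1 := H.step_one
  have h2 := H.step_two
  set F1 := {x | x ∉ A ∧ ∃ e, MM A e = {x} ∧ x ∉ MM A (f e)}
  set F2 := {c | c ∉ A ∧ ∃ e, MM A e = {c}ᶜ ∧ c ∈ MM A (f e)}
  have key : ∀ e z, z ∉ A → z ∉ F1 ∪ F2 → (z ∈ MM A (f e) ↔ z ∈ MM A e) := by
    intro e z hz hzF
    constructor
    · intro h
      by_contra hze
      obtain ⟨v, hv⟩ := exists_idx (A := A) (S := {z}ᶜ)
        ((CEP.ne Computable.id (Computable.const z)).of_iff (fun _ => Iff.rfl)) (by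
          rintro _ _ _ y hy rfl
          exact hz hy)
      refine hzF (Or.inr ⟨hz, v, hv, H.mono ?_ h⟩)
      rw [hv]
      rintro w hw rfl
      exact hze hw
    · intro h
      obtain ⟨i, hi⟩ := exists_s z hz
      have hzi : z ∈ MM A (f i) := by
        by_contra hc
        exact hzF (Or.inl ⟨hz, i, hi, hc⟩)
      refine H.mono ?_ hzi
      rw [hi]
      rintro w rfl
      exact h
  have hfin := finite_trace A (h1.union h2) (MM A t)
  set 𝒮 := {X | (∃ e, X = MM A e) ∧ ∀ z, z ∉ A → z ∉ F1 ∪ F2 → (z ∈ X ↔ z ∈ MM A t)}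
  have hmem : ∀ X : 𝒮, ∃ e, X.1 = MM A e := fun X => X.2.1
  choose c hc using hmem
  have : Finite 𝒮 := hfin
  let h : 𝒮 → 𝒮 := fun X => ⟨MM A (f (c X)), ⟨_, rfl⟩, fun z hz hzF => by
    rw [key _ z hz hzF, ← hc]
    exact X.2.2 z hz hzF⟩
  have hinj : Function.Injective h := by
    intro X Y hXY
    have : MM A (f (c X)) = MM A (f (c Y)) := congrArg Subtype.val hXY
    apply Subtype.ext
    rw [hc X, hc Y]
    exact (H.red _ _).2 this
  obtain ⟨X, hX⟩ := Finite.surjective_of_injective hinj ⟨MM A t, ⟨t, rfl⟩, fun _ _ _ => Iff.rfl⟩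
  exact ⟨c X, congrArg Subtype.val hX⟩

end Setup

/-- If `A` is maximal then `(E_A)⁺` is self-full: every computable reduction of
`(E_A)⁺` to itself has range meeting every `(E_A)⁺`-class. -/
theorem jump_EA_selfFull_of_maximal (A : Set ℕ) (hA : MaximalSet A)
    (f : ℕ → ℕ) (hf : Computable f)
    (hred : ∀ m n, FSJump (EA A) m n ↔ FSJump (EA A) (f m) (f n)) :
    ∀ e, ∃ e', FSJump (EA A) (f e') e := by
  have ce : CEP (fun y => y ∈ A) := by
    obtain ⟨e, he⟩ := hA.1
    rw [he]
    exact CEP.dom.comp ((Computable.const e).pair Computable.id)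
  have H : Setup A f :=
    { ce := ce
      inf := hA.2.1
      coh := fun P hP => hA.2.2 _ hP.ceSet
      cf := hf
      red := fun m n => by rw [← fs_iff, ← fs_iff]; exact hred m n }
  intro e
  obtain ⟨e', he'⟩ := H.final e
  exact ⟨e', fs_iff.2 he'⟩
end

section
/- Let A ⊆ ℕ be a quasi-maximal c.e. set, i.e., an intersection of finitely many maximal c.e. sets. Then E_A is not high for the computable FS-jump; equivalently, =^{ce} is not computably reducible to (E_A)⁺. -/
/-- Equality of c.e. sets: `e =^{ce} e'` iff `W_e = W_{e'}`. -/
def eqCE : ℕ → ℕ → Prop := fun e e' => WSet e = WSet e'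

/-- `A` is quasi-maximal: an intersection of finitely many maximal c.e. sets. -/
def QuasiMaximalSet (A : Set ℕ) : Prop :=
  ∃ k : ℕ, ∃ M : Fin (k + 1) → Set ℕ, (∀ i, MaximalSet (M i)) ∧ A = ⋂ i, M i

open Nat.Partrec (Code)

/-- Semi-decision procedure for membership in the range of a code. -/
theorem partrec_search :
    Partrec (fun q : Code × ℕ => Nat.rfind (fun p : ℕ =>
      Part.some (decide (Code.evaln p.unpair.1 q.1 p.unpair.2 = some q.2)))) := by
  apply Partrec.rfind
  apply Computable.partrec
  apply Primrec.to_comp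
  have h1 : Primrec (fun a : (Code × ℕ) × ℕ => Code.evaln a.2.unpair.1 a.1.1 a.2.unpair.2) :=
    Code.primrec_evaln.comp (Primrec.pair (Primrec.pair
      (Primrec.fst.comp (Primrec.unpair.comp Primrec.snd)) (Primrec.fst.comp Primrec.fst))
      (Primrec.snd.comp (Primrec.unpair.comp Primrec.snd)))
  have h2 : Primrec (fun a : (Code × ℕ) × ℕ => some a.1.2) :=
    Primrec.option_some.comp (Primrec.snd.comp Primrec.fst)
  exact (PrimrecRel.decide Primrec.eq).comp h1 h2

theorem search_dom (q : Code × ℕ) :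
    (Nat.rfind (fun p : ℕ =>
      Part.some (decide (Code.evaln p.unpair.1 q.1 p.unpair.2 = some q.2)))).Dom ↔
      q.2 ∈ (Code.eval q.1).ran := by
  constructor
  · intro h
    have := Nat.rfind_spec (Part.get_mem h)
    simp only [Part.mem_some_iff] at this
    have h2 := of_decide_eq_true this.symm
    exact ⟨_, Code.evaln_sound h2⟩
  · rintro ⟨z, hz⟩
    obtain ⟨k, hk⟩ := Code.evaln_complete.1 hz
    refine Nat.rfind_dom.2 ⟨Nat.pair k z, ?_, ?_⟩
    · simpa using hk
    · intro m _; trivial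

theorem ce_of_partrec {g : ℕ →. ℕ} (hg : Partrec g) : CeSet g.Dom := by
  obtain ⟨c, hc⟩ := Code.exists_code.1 (Partrec.nat_iff.1 hg)
  refine ⟨Encodable.encode c, ?_⟩
  simp [WSet, phi, hc]

theorem ce_ran (e : ℕ) : CeSet (phi e).ran := by
  have h : Partrec (fun x : ℕ => _) :=
    partrec_search.comp (Computable.pair (Computable.const (Denumerable.ofNat Code e)) Computable.id)
  have := ce_of_partrec h
  convert this using 1
  ext x
  exact (search_dom (Denumerable.ofNat Code e, x)).symm

/-- The stage sets. -/
def stg (j s : ℕ) : Set ℕ := {p | p.unpair.1 < j ∨ (p.unpair.1 = j ∧ p.unpair.2 < s)}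

theorem ce_stg (j s : ℕ) : CeSet (stg j s) := by
  classical
  have hp : PrimrecPred (fun p : ℕ => p.unpair.1 < j ∨ (p.unpair.1 = j ∧ p.unpair.2 < s)) := by
    have a : Primrec (fun p : ℕ => p.unpair.1) := Primrec.fst.comp Primrec.unpair
    have b : Primrec (fun p : ℕ => p.unpair.2) := Primrec.snd.comp Primrec.unpair
    exact (Primrec.nat_lt.comp a (Primrec.const j)).or
      ((Primrec.eq.comp a (Primrec.const j)).and (Primrec.nat_lt.comp b (Primrec.const s)))
  have hd := hp.decide
  have : Partrec (fun p : ℕ => cond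
      (decide (p.unpair.1 < j ∨ (p.unpair.1 = j ∧ p.unpair.2 < s))) (Part.some 0) (Part.none : Part ℕ)) :=
    Partrec.cond hd.to_comp (Computable.const 0).partrec Partrec.none
  have := ce_of_partrec this
  convert this using 1
  ext p
  change (_ ∨ _) ↔ (cond (decide _) _ _ : Part ℕ).Dom
  by_cases h : p.unpair.1 < j ∨ (p.unpair.1 = j ∧ p.unpair.2 < s)
  · rw [decide_eq_true h]; exact ⟨fun _ => trivial, fun _ => h⟩
  · rw [decide_eq_false h]; exact ⟨fun a => absurd a h, fun a => a.elim⟩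

theorem jump_mem {A : Set ℕ} {a b x : ℕ} (hx : x ∉ A) (h : FSJump (EA A) a b)
    (ha : x ∈ (phi a).ran) : x ∈ (phi b).ran := by
  have h1 : classOf (EA A) x ∈ classOf (EA A) '' (phi a).ran := ⟨x, ha, rfl⟩
  rw [show _ = _ from h] at h1
  obtain ⟨y, hy, hxy⟩ := h1
  have : x ∈ classOf (EA A) y := by rw [hxy]; exact Or.inl rfl
  rcases this with h | h
  · rwa [← h]
  · exact absurd h.2 hx

theorem jump_of {A : Set ℕ} {a b : ℕ} (h : ∀ x ∉ A, x ∈ (phi a).ran → x ∈ (phi b).ran)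
    (h' : (∃ x ∈ A, x ∈ (phi a).ran) → (∃ x ∈ A, x ∈ (phi b).ran)) :
    classOf (EA A) '' (phi a).ran ⊆ classOf (EA A) '' (phi b).ran := by
  rintro _ ⟨x, hx, rfl⟩
  by_cases hA : x ∈ A
  · obtain ⟨y, hy, hyb⟩ := h' ⟨x, hA, hx⟩
    refine ⟨y, hyb, ?_⟩
    ext z
    simp only [classOf, EA, Set.mem_ofPred_eq]
    constructor
    · rintro (rfl | h)
      · exact Or.inr ⟨hA, hy⟩
      · exact Or.inr ⟨hA, h.2⟩
    · rintro (rfl | h)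
      · exact Or.inr ⟨hy, hA⟩
      · exact Or.inr ⟨hy, h.2⟩
  · exact ⟨x, h x hA hx, rfl⟩

theorem red_mono {A : Set ℕ} {f : ℕ → ℕ} (hf : Computable f)
    (hr : ∀ m n, eqCE m n ↔ FSJump (EA A) (f m) (f n)) {m n x : ℕ} (hmn : WSet m ⊆ WSet n)
    (hx : x ∉ A) (hxm : x ∈ (phi (f m)).ran) : x ∈ (phi (f n)).ran := by
  by_contra hxn
  have p1 : Partrec (fun q : Code × ℕ => Code.eval (Denumerable.ofNat Code m) q.2) :=
    Code.eval_part.comp (Computable.const _) Computable.snd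
  have p2 : Partrec (fun q : Code × ℕ => Code.eval (Denumerable.ofNat Code n) q.2) :=
    Code.eval_part.comp (Computable.const _) Computable.snd
  have p3 : Partrec (fun q : Code × ℕ => _) :=
    partrec_search.comp (Computable.pair
      ((Computable.ofNat Code).comp (hf.comp (Computable.encode.comp Computable.fst)))
      (Computable.const x))
  have p4 := p2.bind ((p3.comp Computable.fst).to₂)
  obtain ⟨k, hk, hkd⟩ := Partrec.merge' p1 p4
  obtain ⟨c, hc⟩ := Code.fixed_point₂ (f := fun c y => k (c, y)) hk.to₂
  have hW : ∀ y, y ∈ WSet (Encodable.encode c) ↔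
      y ∈ WSet m ∨ (y ∈ WSet n ∧ x ∈ (phi (f (Encodable.encode c))).ran) := by
    intro y
    have h1 : y ∈ WSet (Encodable.encode c) ↔ (k (c, y)).Dom := by
      simp only [WSet, phi, Denumerable.ofNat_encode, hc]
      exact Iff.rfl
    rw [h1, (hkd (c, y)).2]
    refine or_congr Iff.rfl ?_
    have h3 := search_dom (Denumerable.ofNat Code (f (Encodable.encode c)), x)
    unfold phi
    rw [← h3]
    simp only [Part.bind_dom]
    constructor
    · rintro ⟨a, b⟩; exact ⟨a, b⟩
    · rintro ⟨a, b⟩; exact ⟨a, b⟩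
  by_cases hxe : x ∈ (phi (f (Encodable.encode c))).ran
  · have : eqCE (Encodable.encode c) n := by
      ext y; rw [hW]
      exact ⟨fun h => h.elim (fun h => hmn h) And.left, fun h => Or.inr ⟨h, hxe⟩⟩
    exact hxn (jump_mem hx ((hr _ _).1 this) hxe)
  · have : eqCE m (Encodable.encode c) := by
      ext y; rw [hW]
      exact ⟨Or.inl, fun h => h.elim id (fun h => absurd h.2 hxe)⟩
    exact hxe (jump_mem hx ((hr _ _).1 this) hxm)

theorem stg_sub {j s : ℕ} : stg j 0 ⊆ stg j s := by
  intro p hp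
  simp only [stg, Set.mem_ofPred_eq] at *
  omega

theorem stg_sub' {j s : ℕ} : stg j s ⊆ stg (j + 1) 0 := by
  intro p hp
  simp only [stg, Set.mem_ofPred_eq] at *
  omega

theorem stg_mono {j l : ℕ} (h : j ≤ l) : stg j 0 ⊆ stg l 0 := by
  intro p hp
  simp only [stg, Set.mem_ofPred_eq] at *
  omega

theorem stg_lt {j s t : ℕ} (h : s < t) : stg j s ≠ stg j t := by
  intro he
  have h1 : Nat.pair j s ∈ stg j t := by simp [stg, h]
  rw [← he] at h1
  simp [stg] at h1

theorem quasi_not_red (A : Set ℕ) (hA : QuasiMaximalSet A) :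
    ¬ Reduces eqCE (FSJump (EA A)) := by
  rintro ⟨f, hf, hr⟩
  obtain ⟨k, M, hM, rfl⟩ := hA
  choose idx hidx using ce_stg
  set A : Set ℕ := ⋂ i, M i with hAdef
  let R : ℕ → ℕ → Set ℕ := fun j s => (phi (f (idx j s))).ran
  have mono : ∀ {j s j' s' x}, stg j s ⊆ stg j' s' → x ∉ A → x ∈ R j s → x ∈ R j' s' := by
    intro j s j' s' x h hx hxr
    rw [hidx, hidx] at h
    exact red_mono hf hr h hx hxr
  have key : ∀ j, ∃ i, ((R (j+1) 0 \ R j 0) \ M i).Infinite := by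
    intro j
    by_contra! hcon
    have hfin : ((R (j+1) 0 \ R j 0) \ A).Finite := by
      have : (R (j+1) 0 \ R j 0) \ A = ⋃ i, ((R (j+1) 0 \ R j 0) \ M i) := by
        rw [hAdef, Set.sdiff_iInter]
      rw [this]
      exact Set.finite_iUnion fun i => by simpa using hcon i
    set D := (R (j+1) 0 \ R j 0) \ A with hD
    have : Finite D := hfin
    obtain ⟨s, t, hst, he⟩ := Finite.exists_ne_map_eq_of_infinite
      (fun s : ℕ => (({d : D | (d : ℕ) ∈ R j s}, ∃ x ∈ A, x ∈ R j s) : Set D × Prop))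
    simp only [Prod.mk.injEq] at he
    obtain ⟨he1, he2⟩ := he
    have hiff : ∀ x ∉ A, x ∈ R j s ↔ x ∈ R j t := by
      intro x hx
      by_cases hj : x ∈ R j 0
      · exact ⟨fun _ => mono stg_sub hx hj, fun _ => mono stg_sub hx hj⟩
      · by_cases hj1 : x ∈ R (j+1) 0
        · have := Set.ext_iff.1 he1 ⟨x, ⟨hj1, hj⟩, hx⟩
          exact this
        · exact ⟨fun h => absurd (mono stg_sub' hx h) hj1,
            fun h => absurd (mono stg_sub' hx h) hj1⟩
    have hJ : FSJump (EA A) (f (idx j s)) (f (idx j t)) :=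
      Set.Subset.antisymm (jump_of (fun x hx => (hiff x hx).1) (fun h => he2 ▸ h))
        (jump_of (fun x hx => (hiff x hx).2) (fun h => (iff_of_eq he2).2 h))
    have hE := (hr _ _).2 hJ
    have hE' : stg j s = stg j t := by rw [hidx, hidx]; exact hE
    rcases lt_or_gt_of_ne hst with h | h
    · exact stg_lt h hE'
    · exact stg_lt h hE'.symm
  choose i hi using key
  have hlt : ∀ j l, j < l → i j ≠ i l := by
    intro j l hjl heq
    rcases (hM (i j)).2.2 _ (ce_ran (f (idx (j+1) 0))) with h | h
    · exact hi j (h.subset fun x hx => ⟨hx.1.1, hx.2⟩)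
    · apply hi l
      rw [← heq]
      refine h.subset fun x hx => ⟨fun hxr => hx.1.2 ?_, hx.2⟩
      refine mono (stg_mono hjl) ?_ hxr
      intro hxA
      exact hx.2 (Set.mem_iInter.1 hxA _)
  obtain ⟨a, b, hab, he⟩ := Finite.exists_ne_map_eq_of_infinite i
  rcases lt_or_gt_of_ne hab with h | h
  · exact hlt _ _ h he
  · exact hlt _ _ h he.symm

/-- If `A` is quasi-maximal, then `E_A` is not high for the computable FS-jump;
equivalently, `=^{ce}` is not computably reducible to `(E_A)⁺`. -/
theorem quasiMaximal_not_high (A : Set ℕ) (hA : QuasiMaximalSet A) :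
    ¬ (Reduces (FSJump (EA A)) eqCE ∧ Reduces eqCE (FSJump (EA A))) ∧
      ¬ Reduces eqCE (FSJump (EA A)) :=
  ⟨fun h => quasi_not_red A hA h.2, quasi_not_red A hA⟩
end
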